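/- Suppose the β_n, α_n satisfy, for all n ≥ 1 and all t, both extended relativistic Toda lattice equations β_n'(t) = conj(q)·β_n(t)·(α_n(t) − α_{n+1}(t)) + q·β_n(t)·( α_{n+1}(t)/(β_{n+1}(t)·β_n(t)) − α_n(t)/(β_n(t)·β_{n−1}(t)) ) and α_n'(t) = conj(q)·α_n(t)·(α_{n−1}(t) + β_{n−1}(t) − α_{n+1}(t) − β_n(t)) + q·α_n(t)·( 1/β_{n−1}(t) − 1/β_n(t) ). Then for every n ≥ 2 and every t, d_n'(t) = 4·Re(q)·[ d_n d_{n−1}/(1+c_{n−2}²) − d_n d_{n+1}/(1+c_{n+1}²) + d_n(1−d_n)(c_{n−1}² − c_n²)/( (1+c_n²)(1+c_{n−1}²) ) ] − 4·Im(q)·[ d_n d_{n−1} c_{n−2}/(1+c_{n−2}²) − d_n d_{n+1} c_{n+1}/(1+c_{n+1}²) + d_n(1−d_n)(c_n − c_{n−1})(1 − c_n c_{n−1})/( (1+c_n²)(1+c_{n−1}²) ) ], where all functions are evaluated at t. -/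

import Mathlib

/-!
Write `u = 1 + i c` and `v = 1 - i c`, so that `u + v = 2`, `β = -v / u` and `1 - β = 2 / u`. The
parametrization then inverts to `d_n = α_n / ((1 - β_n) (1 - β_{n-1}))`, and the logarithmic
derivative of this quotient is given directly by the two Toda equations. Its `p`-part collapses to
`2 (d_{n-1} / u_{n-2} - d_{n+1} / u_{n+1} + (1 - d_n) (1 / u_n - 1 / u_{n-1}))`, and since
`1 / β = -u / v` and `α_n / (β_n β_{n-1}) = 4 d_n / (v_n v_{n-1})`, its `q`-part is the same
expression with `u` and `v` exchanged. Splitting `1 / (1 ± i c) = (1 ∓ i c) / (1 + c²)` separates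
the terms in `p + q` and `q - p`, which for `p = conj q` are `2 Re q` and `2 i Im q`.
-/

open Complex ComplexConjugate

section Algebra

variable {K : Type*} [Field K]

/-- The coefficient of `p` in the logarithmic derivative of `d_{n+2}` is twice this rate at
`w = 1 / u`, and the coefficient of `q` is twice this rate at `w = 1 / v`. The index is shifted by
two because the coupling reaches from site `n` to site `n + 3`. -/
def couplingRate (d w : ℕ → K) (n : ℕ) : K :=
  d (n + 1) * w n - d (n + 3) * w (n + 3) + (1 - d (n + 2)) * (w (n + 2) - w (n + 1))

theorem mul_couplingRate_one_div_one_add_sq (c d : ℕ → K) {n : ℕ} (h₁ : 1 + c (n + 1) ^ 2 ≠ 0)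
    (h₂ : 1 + c (n + 2) ^ 2 ≠ 0) :
    d (n + 2) * couplingRate d (fun k ↦ 1 / (1 + c k ^ 2)) n =
      d (n + 2) * d (n + 1) / (1 + c n ^ 2) - d (n + 2) * d (n + 3) / (1 + c (n + 3) ^ 2) +
        d (n + 2) * (1 - d (n + 2)) * (c (n + 1) ^ 2 - c (n + 2) ^ 2) /
          ((1 + c (n + 2) ^ 2) * (1 + c (n + 1) ^ 2)) := by
  have hdiff : 1 / (1 + c (n + 2) ^ 2) - 1 / (1 + c (n + 1) ^ 2) =
      (c (n + 1) ^ 2 - c (n + 2) ^ 2) / ((1 + c (n + 2) ^ 2) * (1 + c (n + 1) ^ 2)) := by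
    field_simp
    ring
  rw [couplingRate, hdiff]
  ring

theorem mul_couplingRate_div_one_add_sq (c d : ℕ → K) {n : ℕ} (h₁ : 1 + c (n + 1) ^ 2 ≠ 0)
    (h₂ : 1 + c (n + 2) ^ 2 ≠ 0) :
    d (n + 2) * couplingRate d (fun k ↦ c k / (1 + c k ^ 2)) n =
      d (n + 2) * d (n + 1) * c n / (1 + c n ^ 2) -
        d (n + 2) * d (n + 3) * c (n + 3) / (1 + c (n + 3) ^ 2) +
        d (n + 2) * (1 - d (n + 2)) * (c (n + 2) - c (n + 1)) * (1 - c (n + 2) * c (n + 1)) /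
          ((1 + c (n + 2) ^ 2) * (1 + c (n + 1) ^ 2)) := by
  have hdiff : c (n + 2) / (1 + c (n + 2) ^ 2) - c (n + 1) / (1 + c (n + 1) ^ 2) =
      (c (n + 2) - c (n + 1)) * (1 - c (n + 2) * c (n + 1)) /
        ((1 + c (n + 2) ^ 2) * (1 + c (n + 1) ^ 2)) := by
    field_simp
    ring
  rw [couplingRate, hdiff]
  ring

/-- The logarithmic derivative of `β_{n+1}` prescribed by the extended relativistic Toda
equations. -/
def todaRateβ (p q : K) (β α : ℕ → K) (n : ℕ) : K :=
  p * (α (n + 1) - α (n + 2)) +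
    q * (α (n + 2) / (β (n + 2) * β (n + 1)) - α (n + 1) / (β (n + 1) * β n))

/-- The logarithmic derivative of `α_{n+1}` prescribed by the extended relativistic Toda
equations. -/
def todaRateα (p q : K) (β α : ℕ → K) (n : ℕ) : K :=
  p * (α n + β n - α (n + 2) - β (n + 1)) + q * (1 / β n - 1 / β (n + 1))

/-- The parametrization of the recurrence coefficients `β`, `α` of the CD kernel polynomials at a
fixed time, with `u` and `v` playing the roles of `1 + i c` and `1 - i c`. The value `β 0` is left
free, as it does not follow the pattern of the other `β n`. -/
structure IsCDParametrization (u v d β α : ℕ → K) : Prop where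
  add_eq_two : ∀ n, u n + v n = 2
  u_ne_zero : ∀ n, u n ≠ 0
  v_ne_zero : ∀ n, v n ≠ 0
  d_one : d 1 = 0
  β_succ : ∀ n, β (n + 1) = -(v (n + 1) / u (n + 1))
  α_succ : ∀ n, α (n + 1) = 4 * d (n + 1) / (u (n + 1) * u n)

namespace IsCDParametrization

variable {u v d β α : ℕ → K}

theorem one_sub_β_succ (h : IsCDParametrization u v d β α) (n : ℕ) :
    1 - β (n + 1) = 2 / u (n + 1) := by
  have hu := h.u_ne_zero (n + 1)
  rw [h.β_succ, ← h.add_eq_two (n + 1)]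
  field_simp
  ring

theorem α_div_β_mul_β (h : IsCDParametrization u v d β α) (n : ℕ) :
    α (n + 1) / (β (n + 1) * β n) = 4 * d (n + 1) / (v (n + 1) * v n) := by
  cases n with
  | zero => simp [h.α_succ, h.d_one]
  | succ n =>
    have hu := h.u_ne_zero
    have hv := h.v_ne_zero
    rw [h.α_succ, h.β_succ, h.β_succ]
    field_simp [hu (n + 1), hu (n + 2), hv (n + 1), hv (n + 2)]

/-- For real `c` this is complex conjugation of the `u`, `v`, `β` and `α`. -/
theorem symm (h : IsCDParametrization u v d β α) :
    IsCDParametrization v u d (fun n ↦ 1 / β n) (fun n ↦ α n / (β n * β (n - 1))) where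
  add_eq_two n := by rw [add_comm, h.add_eq_two]
  u_ne_zero := h.v_ne_zero
  v_ne_zero := h.u_ne_zero
  d_one := h.d_one
  β_succ n := by rw [h.β_succ, one_div, inv_neg, inv_div]
  α_succ := h.α_div_β_mul_β

variable [NeZero (2 : K)]

theorem one_sub_β_succ_ne_zero (h : IsCDParametrization u v d β α) (n : ℕ) :
    1 - β (n + 1) ≠ 0 := by
  rw [h.one_sub_β_succ]
  exact div_ne_zero two_ne_zero (h.u_ne_zero _)

theorem β_succ_div_one_sub (h : IsCDParametrization u v d β α) (n : ℕ) :
    β (n + 1) / (1 - β (n + 1)) = -(v (n + 1) / 2) := by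
  have hu := h.u_ne_zero (n + 1)
  rw [h.one_sub_β_succ, h.β_succ]
  field_simp

theorem d_eq_α_div (h : IsCDParametrization u v d β α) (n : ℕ) :
    d (n + 2) = α (n + 2) / ((1 - β (n + 2)) * (1 - β (n + 1))) := by
  have hu₁ := h.u_ne_zero (n + 1)
  have hu₂ := h.u_ne_zero (n + 2)
  rw [h.one_sub_β_succ, h.one_sub_β_succ, h.α_succ]
  field_simp
  ring

theorem two_mul_couplingRate_one_div (h : IsCDParametrization u v d β α) (n : ℕ) :
    2 * couplingRate d (fun k ↦ 1 / u k) n =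
      α (n + 1) + β (n + 1) - α (n + 3) - β (n + 2) -
        v (n + 2) / 2 * (α (n + 2) - α (n + 3)) - v (n + 1) / 2 * (α (n + 1) - α (n + 2)) := by
  have hv (k : ℕ) : v k = 2 - u k := eq_sub_of_add_eq' (h.add_eq_two k)
  have hu₀ := h.u_ne_zero n
  have hu₁ := h.u_ne_zero (n + 1)
  have hu₂ := h.u_ne_zero (n + 2)
  have hu₃ := h.u_ne_zero (n + 3)
  simp only [couplingRate, h.α_succ, h.β_succ, hv]
  field_simp
  ring

theorem todaRateα_add_todaRateβ (h : IsCDParametrization u v d β α) (p q : K) (n : ℕ) :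
    todaRateα p q β α (n + 1) + β (n + 2) / (1 - β (n + 2)) * todaRateβ p q β α (n + 1) +
        β (n + 1) / (1 - β (n + 1)) * todaRateβ p q β α n =
      2 * (p * couplingRate d (fun k ↦ 1 / u k) n + q * couplingRate d (fun k ↦ 1 / v k) n) := by
  have hp := h.two_mul_couplingRate_one_div n
  have hq := h.symm.two_mul_couplingRate_one_div n
  have hu (k : ℕ) : u k / 2 = 1 - v k / 2 := by
    field_simp
    exact eq_sub_of_add_eq (h.add_eq_two k)
  simp only [Nat.add_sub_cancel, Nat.add_succ_sub_one, hu] at hq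
  rw [h.β_succ_div_one_sub, h.β_succ_div_one_sub, todaRateα, todaRateβ, todaRateβ]
  linear_combination -p * hp - q * hq

end IsCDParametrization

end Algebra

section Calculus

variable {𝕜 K : Type*} [NontriviallyNormedField 𝕜] [NontriviallyNormedField K] [NormedAlgebra 𝕜 K]

theorem hasDerivAt_div_one_sub_mul_one_sub {a b₁ b₂ : 𝕜 → K} {A B₁ B₂ : K} {t : 𝕜}
    (ha : HasDerivAt a (a t * A) t) (hb₁ : HasDerivAt b₁ (b₁ t * B₁) t)
    (hb₂ : HasDerivAt b₂ (b₂ t * B₂) t) (h₁ : 1 - b₁ t ≠ 0) (h₂ : 1 - b₂ t ≠ 0) :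
    HasDerivAt (fun s ↦ a s / ((1 - b₁ s) * (1 - b₂ s)))
      (a t / ((1 - b₁ t) * (1 - b₂ t)) *
        (A + b₁ t / (1 - b₁ t) * B₁ + b₂ t / (1 - b₂ t) * B₂)) t := by
  convert ha.fun_div ((hb₁.const_sub 1).fun_mul (hb₂.const_sub 1)) (mul_ne_zero h₁ h₂) using 1
  field_simp
  ring

theorem hasDerivAt_of_toda [NeZero (2 : K)] {p q : K} {u v d β α : ℕ → 𝕜 → K} {n : ℕ} {t : 𝕜}
    (h : ∀ s, IsCDParametrization (u · s) (v · s) (d · s) (β · s) (α · s))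
    (hβ₁ : HasDerivAt (β (n + 1)) (β (n + 1) t * todaRateβ p q (β · t) (α · t) n) t)
    (hβ₂ : HasDerivAt (β (n + 2)) (β (n + 2) t * todaRateβ p q (β · t) (α · t) (n + 1)) t)
    (hα : HasDerivAt (α (n + 2)) (α (n + 2) t * todaRateα p q (β · t) (α · t) (n + 1)) t) :
    HasDerivAt (d (n + 2))
      (2 * d (n + 2) t * (p * couplingRate (d · t) (fun k ↦ 1 / u k t) n +
        q * couplingRate (d · t) (fun k ↦ 1 / v k t) n)) t := by
  have hd : d (n + 2) = fun s ↦ α (n + 2) s / ((1 - β (n + 2) s) * (1 - β (n + 1) s)) :=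
    funext fun s ↦ (h s).d_eq_α_div n
  have hderiv := hasDerivAt_div_one_sub_mul_one_sub hα hβ₂ hβ₁
    ((h t).one_sub_β_succ_ne_zero _) ((h t).one_sub_β_succ_ne_zero _)
  rw [(h t).todaRateα_add_todaRateβ, ← (h t).d_eq_α_div, ← hd] at hderiv
  convert hderiv using 1
  ring

end Calculus

section Complex

theorem one_add_I_mul_mul_one_sub_I_mul (z : ℂ) : (1 + I * z) * (1 - I * z) = 1 + z ^ 2 := by
  linear_combination -z ^ 2 * I_sq

theorem one_div_one_add_I_mul {z : ℂ} (hz : 1 + z ^ 2 ≠ 0) :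
    1 / (1 + I * z) = 1 / (1 + z ^ 2) - I * (z / (1 + z ^ 2)) := by
  rw [← one_add_I_mul_mul_one_sub_I_mul] at hz ⊢
  have hu := left_ne_zero_of_mul hz
  have hv := right_ne_zero_of_mul hz
  field_simp

theorem one_div_one_sub_I_mul {z : ℂ} (hz : 1 + z ^ 2 ≠ 0) :
    1 / (1 - I * z) = 1 / (1 + z ^ 2) + I * (z / (1 + z ^ 2)) := by
  have h := one_div_one_add_I_mul (z := -z) (by rwa [neg_sq])
  rw [neg_sq] at h
  linear_combination h

theorem mul_couplingRate_add_mul_couplingRate {c : ℕ → ℂ} (hc : ∀ k, 1 + c k ^ 2 ≠ 0) (d : ℕ → ℂ)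
    (p q : ℂ) (n : ℕ) :
    p * couplingRate d (fun k ↦ 1 / (1 + I * c k)) n +
        q * couplingRate d (fun k ↦ 1 / (1 - I * c k)) n =
      (p + q) * couplingRate d (fun k ↦ 1 / (1 + c k ^ 2)) n +
        I * (q - p) * couplingRate d (fun k ↦ c k / (1 + c k ^ 2)) n := by
  simp only [couplingRate, one_div_one_add_I_mul (hc _), one_div_one_sub_I_mul (hc _)]
  ring

theorem isCDParametrization_one_add_I_mul {c d β α : ℕ → ℂ} (hc : ∀ n, 1 + c n ^ 2 ≠ 0)
    (hd1 : d 1 = 0) (hβ : ∀ n, 1 ≤ n → β n = -((1 - I * c n) / (1 + I * c n)))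
    (hα : ∀ n, 1 ≤ n → α n = 4 * d n / ((1 + I * c n) * (1 + I * c (n - 1)))) :
    IsCDParametrization (fun n ↦ 1 + I * c n) (fun n ↦ 1 - I * c n) d β α where
  add_eq_two n := by ring
  u_ne_zero n := left_ne_zero_of_mul (one_add_I_mul_mul_one_sub_I_mul (c n) ▸ hc n)
  v_ne_zero n := right_ne_zero_of_mul (one_add_I_mul_mul_one_sub_I_mul (c n) ▸ hc n)
  d_one := hd1
  β_succ n := hβ (n + 1) n.succ_pos
  α_succ n := hα (n + 1) n.succ_pos

theorem deriv_eq_re_sub_im_of_ofReal {f : ℝ → ℝ} {t a b : ℝ} {q : ℂ} (hf : DifferentiableAt ℝ f t)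
    (h : deriv (fun s ↦ (f s : ℂ)) t = 2 * (conj q + q) * a + 2 * (I * (q - conj q)) * b) :
    deriv f t = 4 * q.re * a - 4 * q.im * b := by
  rw [hf.hasDerivAt.ofReal_comp.deriv, add_comm (conj q), add_conj, sub_conj] at h
  apply ofReal_injective
  rw [h]
  push_cast
  linear_combination 4 * q.im * b * I_sq

end Complex

theorem stmt_17_general {𝕜 : Type*} [NontriviallyNormedField 𝕜] [NormedAlgebra 𝕜 ℂ] (p q : ℂ)
    (c d : ℕ → 𝕜 → ℂ) (hcdiff : ∀ n, Differentiable 𝕜 (c n))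
    (hddiff : ∀ n, Differentiable 𝕜 (d n)) (hc : ∀ n t, 1 + c n t ^ 2 ≠ 0) (hd1 : ∀ t, d 1 t = 0)
    (β α : ℕ → 𝕜 → ℂ)
    (hβ : ∀ n, 1 ≤ n → ∀ t, β n t = -((1 - I * c n t) / (1 + I * c n t)))
    (hα : ∀ n, 1 ≤ n → ∀ t, α n t = 4 * d n t / ((1 + I * c n t) * (1 + I * c (n - 1) t)))
    (hTodaβ : ∀ n, 1 ≤ n → ∀ t, deriv (β n) t =
      p * β n t * (α n t - α (n + 1) t) +
        q * β n t *
          (α (n + 1) t / (β (n + 1) t * β n t) - α n t / (β n t * β (n - 1) t)))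
    (hTodaα : ∀ n, 1 ≤ n → ∀ t, deriv (α n) t =
      p * α n t * (α (n - 1) t + β (n - 1) t - α (n + 1) t - β n t) +
        q * α n t * (1 / β (n - 1) t - 1 / β n t)) :
    ∀ n, 2 ≤ n → ∀ t, deriv (d n) t =
      2 * (p + q) *
          (d n t * d (n - 1) t / (1 + c (n - 2) t ^ 2) -
            d n t * d (n + 1) t / (1 + c (n + 1) t ^ 2) +
            d n t * (1 - d n t) * (c (n - 1) t ^ 2 - c n t ^ 2) /
              ((1 + c n t ^ 2) * (1 + c (n - 1) t ^ 2))) +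
        2 * (I * (q - p)) *
          (d n t * d (n - 1) t * c (n - 2) t / (1 + c (n - 2) t ^ 2) -
            d n t * d (n + 1) t * c (n + 1) t / (1 + c (n + 1) t ^ 2) +
            d n t * (1 - d n t) * (c n t - c (n - 1) t) * (1 - c n t * c (n - 1) t) /
              ((1 + c n t ^ 2) * (1 + c (n - 1) t ^ 2))) := by
  intro n hn t
  obtain ⟨m, rfl⟩ := Nat.exists_eq_add_of_le' hn
  have hparam (s : 𝕜) := isCDParametrization_one_add_I_mul (hc · s) (hd1 s)
    (fun k hk ↦ hβ k hk s) (fun k hk ↦ hα k hk s)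
  have hu (k : ℕ) (s : 𝕜) : 1 + I * c k s ≠ 0 := (hparam s).u_ne_zero k
  have hβ' (k : ℕ) : HasDerivAt (β (k + 1))
      (β (k + 1) t * todaRateβ p q (β · t) (α · t) k) t := by
    have hdiff : Differentiable 𝕜 (β (k + 1)) := by
      rw [funext (hβ (k + 1) k.succ_pos)]
      fun_prop (disch := exact hu _)
    refine (hdiff t).hasDerivAt.congr_deriv ?_
    rw [hTodaβ (k + 1) k.succ_pos, todaRateβ, Nat.add_sub_cancel]
    ring
  have hα' : HasDerivAt (α (m + 2))
      (α (m + 2) t * todaRateα p q (β · t) (α · t) (m + 1)) t := by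
    have hdiff : Differentiable 𝕜 (α (m + 2)) := by
      rw [funext (hα (m + 2) (by lia))]
      fun_prop (disch := exact fun s ↦ mul_ne_zero (hu _ s) (hu _ s))
    refine (hdiff t).hasDerivAt.congr_deriv ?_
    rw [hTodaα _ (by lia), todaRateα, Nat.add_succ_sub_one]
    ring
  calc
    deriv (d (m + 2)) t
    _ = 2 * d (m + 2) t * (p * couplingRate (d · t) (fun k ↦ 1 / (1 + I * c k t)) m +
          q * couplingRate (d · t) (fun k ↦ 1 / (1 - I * c k t)) m) :=
      (hasDerivAt_of_toda hparam (hβ' m) (hβ' (m + 1)) hα').deriv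
    _ = 2 * (p + q) * (d (m + 2) t * couplingRate (d · t) (fun k ↦ 1 / (1 + c k t ^ 2)) m) +
          2 * (I * (q - p)) *
            (d (m + 2) t * couplingRate (d · t) (fun k ↦ c k t / (1 + c k t ^ 2)) m) := by
      rw [mul_couplingRate_add_mul_couplingRate (hc · t)]
      ring
    _ = _ := by
      rw [mul_couplingRate_one_div_one_add_sq (c · t) (d · t) (hc _ t) (hc _ t),
        mul_couplingRate_div_one_add_sq (c · t) (d · t) (hc _ t) (hc _ t)]
      rfl

theorem stmt_17 (q : ℂ) (c d : ℕ → ℝ → ℝ)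
    (hcdiff : ∀ n, Differentiable ℝ (c n)) (hddiff : ∀ n, Differentiable ℝ (d n))
    (hc0 : ∀ t, c 0 t = 1) (hd1 : ∀ t, d 1 t = 0)
    (β α : ℕ → ℝ → ℂ)
    (hβ0 : ∀ t, β 0 t = 1) (hα0 : ∀ t, α 0 t = -1)
    (hβ : ∀ n, 1 ≤ n → ∀ t, β n t =
      -((1 - Complex.I * (c n t : ℂ)) / (1 + Complex.I * (c n t : ℂ))))
    (hα : ∀ n, 1 ≤ n → ∀ t, α n t =
      4 * (d n t : ℂ) /
        ((1 + Complex.I * (c n t : ℂ)) * (1 + Complex.I * (c (n - 1) t : ℂ))))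
    (hTodaβ : ∀ n, 1 ≤ n → ∀ t, deriv (β n) t =
      (starRingEnd ℂ) q * β n t * (α n t - α (n + 1) t) +
        q * β n t *
          (α (n + 1) t / (β (n + 1) t * β n t) - α n t / (β n t * β (n - 1) t)))
    (hTodaα : ∀ n, 1 ≤ n → ∀ t, deriv (α n) t =
      (starRingEnd ℂ) q * α n t * (α (n - 1) t + β (n - 1) t - α (n + 1) t - β n t) +
        q * α n t * (1 / β (n - 1) t - 1 / β n t)) :
    ∀ n, 2 ≤ n → ∀ t : ℝ, deriv (d n) t =
      4 * q.re *
          (d n t * d (n - 1) t / (1 + (c (n - 2) t) ^ 2) -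
            d n t * d (n + 1) t / (1 + (c (n + 1) t) ^ 2) +
            d n t * (1 - d n t) * ((c (n - 1) t) ^ 2 - (c n t) ^ 2) /
              ((1 + (c n t) ^ 2) * (1 + (c (n - 1) t) ^ 2))) -
        4 * q.im *
          (d n t * d (n - 1) t * c (n - 2) t / (1 + (c (n - 2) t) ^ 2) -
            d n t * d (n + 1) t * c (n + 1) t / (1 + (c (n + 1) t) ^ 2) +
            d n t * (1 - d n t) * (c n t - c (n - 1) t) * (1 - c n t * c (n - 1) t) /
              ((1 + (c n t) ^ 2) * (1 + (c (n - 1) t) ^ 2))) := by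
  intro n hn t
  refine deriv_eq_re_sub_im_of_ofReal (hddiff n t) ?_
  push_cast
  exact stmt_17_general (conj q) q (fun n t ↦ c n t) (fun n t ↦ d n t)
    (fun n t ↦ (hcdiff n t).hasDerivAt.ofReal_comp.differentiableAt)
    (fun n t ↦ (hddiff n t).hasDerivAt.ofReal_comp.differentiableAt)
    (fun n t ↦ by exact_mod_cast (by positivity : 1 + c n t ^ 2 ≠ 0)) (by simp [hd1])
    β α hβ hα hTodaβ hTodaα n hn t
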